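/- arXiv:2503.23661 — 4 statements merged into one kernel-verified Lean document; each statement's English description precedes it below -/
import Mathlib

section
/- For every m ≥ 1, the number of walks of length m in ℤ² starting at (2,1) with allowed steps from (a,b) to (b+1,i) for 1 ≤ i ≤ a equals C_{⌊m/2⌋+1} · C_{⌈m/2⌉+1}, where C_n denotes the n-th Catalan number. -/
/-- One allowed step of the walk: from `(a,b)` one may move to `(b+1,i)` with `1 ≤ i ≤ a`. -/
def WalkStep (p q : ℤ × ℤ) : Prop := q.1 = p.2 + 1 ∧ 1 ≤ q.2 ∧ q.2 ≤ p.1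

/-- `l` is the list of points `p_0, …, p_m` of a walk of length `m` in `ℤ²`
starting at `(2,1)` with the allowed steps. -/
def IsWalk (m : ℕ) (l : List (ℤ × ℤ)) : Prop :=
  l.length = m + 1 ∧ l.head? = some (2, 1) ∧ l.Chain' WalkStep

/-- The number of walks of length `m`. -/
noncomputable def walkCount (m : ℕ) : ℕ :=
  Nat.card {l : List (ℤ × ℤ) // IsWalk m l}

/-- `W_m(a,b)`: the number of walks of length `m` ending at the point `(a,b)`. -/
noncomputable def walkCountEnd (m : ℕ) (a b : ℤ) : ℕ :=
  Nat.card {l : List (ℤ × ℤ) // IsWalk m l ∧ l.getLast? = some (a, b)}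

/-
Put `b₋₁ = 1` and let `b_k` be the second coordinate of the `k`-th point. The first coordinate of
that point is `b_{k-1} + 1`, so the only constraint is `1 ≤ b_{k+1} ≤ b_{k-1} + 1`: the entries of
even and of odd index form two independent sequences in which upward jumps are at most `1`, and
removing the first step of the walk interchanges their roles. The number of such sequences with `n`
entries, the first one at most `a`, is the coefficient of `X ^ n` in `C ^ a`, where
`C = 1 + X C ^ 2` is the Catalan series: splitting off the first entry `j + 1` is the identity
`C ^ a = 1 + X ∑_{j < a} C ^ (j + 2)`. From `(2, 1)` both sequences have `a = 2`, and the
coefficients of `C ^ 2` are the shifted Catalan numbers.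
-/

open PowerSeries

lemma catalanSeries_pow_eq_one_add_sum_mul_X (a : ℕ) :
    catalanSeries ^ a = 1 + (∑ j ∈ Finset.range a, catalanSeries ^ (j + 2)) * X := by
  induction a with
  | zero => simp
  | succ a ih =>
    calc catalanSeries ^ (a + 1)
        = catalanSeries ^ a * (catalanSeries ^ 2 * X + 1) := by
          rw [catalanSeries_sq_mul_X_add_one, pow_succ]
      _ = catalanSeries ^ a + catalanSeries ^ (a + 2) * X := by ring
      _ = 1 + (∑ j ∈ Finset.range (a + 1), catalanSeries ^ (j + 2)) * X := by
          rw [ih, Finset.sum_range_succ]; ring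

lemma coeff_succ_catalanSeries_pow (n a : ℕ) :
    coeff (n + 1) (catalanSeries ^ a) =
      ∑ j ∈ Finset.range a, coeff n (catalanSeries ^ (j + 2)) := by
  rw [catalanSeries_pow_eq_one_add_sum_mul_X, map_add, coeff_succ_mul_X, map_sum, coeff_one,
    if_neg n.succ_ne_zero, zero_add]

lemma coeff_catalanSeries_sq (n : ℕ) : coeff n (catalanSeries ^ 2) = catalan (n + 1) := by
  simpa using (coeff_succ_catalanSeries_pow n 1).symm

section Chains

variable {α : Type*} {r : α → α → Prop} {n : ℕ} {x y : α} {l : List α}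

/-- `l` lists the points `x = p₀, p₁, …, pₙ` of a path of `n` steps of the relation `r` issuing
from `x`. For `r = WalkStep` and `x = (2, 1)` this unfolds to `IsWalk n l`; the start is a parameter
so that paths can be counted by removing their first step. -/
def IsChainFrom (r : α → α → Prop) (n : ℕ) (x : α) (l : List α) : Prop :=
  l.length = n + 1 ∧ l.head? = some x ∧ l.IsChain r

lemma isChainFrom_zero_iff : IsChainFrom r 0 x l ↔ l = [x] := by
  constructor
  · rintro ⟨hlen, hhead, -⟩
    obtain ⟨y, rfl⟩ := List.length_eq_one_iff.1 hlen
    simpa using hhead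
  · rintro rfl
    exact ⟨rfl, rfl, List.isChain_singleton x⟩

lemma IsChainFrom.cons (hxy : r x y) (hl : IsChainFrom r n y l) :
    IsChainFrom r (n + 1) x (x :: l) := by
  obtain ⟨hlen, hhead, hchain⟩ := hl
  refine ⟨by simp [hlen], rfl, hchain.cons fun z hz ↦ ?_⟩
  obtain rfl : y = z := by simpa [hhead] using hz
  exact hxy

lemma IsChainFrom.exists_eq_cons (hl : IsChainFrom r (n + 1) x l) :
    ∃ y l', r x y ∧ IsChainFrom r n y l' ∧ l = x :: l' := by
  obtain ⟨hlen, hhead, hchain⟩ := hl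
  match l, hlen, hhead, hchain with
  | z :: y :: l', hlen, hhead, hchain =>
    obtain rfl : z = x := by simpa using hhead
    obtain ⟨hzy, hchain'⟩ := List.isChain_cons_cons.1 hchain
    exact ⟨y, y :: l', hzy, ⟨by simpa using hlen, rfl, hchain'⟩, rfl⟩

/-- Removing the first step, read backwards: a path of `n + 1` steps from `x` is a successor `y` of
`x` together with a path of `n` steps from `y`. -/
noncomputable def chainFromSuccEquiv (r : α → α → Prop) (n : ℕ) (x : α) :
    (Σ y : {y // r x y}, {l // IsChainFrom r n y.1 l}) ≃ {l // IsChainFrom r (n + 1) x l} :=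
  Equiv.ofBijective (fun c ↦ ⟨x :: c.2.1, c.2.2.cons c.1.2⟩) <| by
    constructor
    · rintro ⟨⟨y, hy⟩, l, hl⟩ ⟨⟨y', hy'⟩, l', hl'⟩ h
      obtain rfl : l = l' := by simpa using h
      obtain rfl : y = y' := Option.some.inj (hl.2.1.symm.trans hl'.2.1)
      rfl
    · rintro ⟨l, hl⟩
      obtain ⟨y, l', hy, hl', rfl⟩ := hl.exists_eq_cons
      exact ⟨⟨⟨y, hy⟩, l', hl'⟩, rfl⟩

instance finite_isChainFrom [∀ x, Finite {y // r x y}] (n : ℕ) (x : α) :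
    Finite {l // IsChainFrom r n x l} := by
  induction n generalizing x with
  | zero => simp only [isChainFrom_zero_iff]; infer_instance
  | succ n ih => exact Finite.of_equiv _ (chainFromSuccEquiv r n x)

lemma card_isChainFrom_zero (r : α → α → Prop) (x : α) :
    Nat.card {l // IsChainFrom r 0 x l} = 1 := by
  simp only [isChainFrom_zero_iff, Nat.card_unique]

lemma card_isChainFrom_succ [∀ x, Finite {y // r x y}] {ι : Type*} [Fintype ι]
    (e : ι ≃ {y // r x y}) (n : ℕ) :
    Nat.card {l // IsChainFrom r (n + 1) x l} =
      ∑ i, Nat.card {l // IsChainFrom r n (e i).1 l} := by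
  rw [← Nat.card_sigma]
  exact Nat.card_congr
    ((e.sigmaCongrLeft (β := fun y ↦ {l // IsChainFrom r n y.1 l})).trans
      (chainFromSuccEquiv r n x)).symm

end Chains

/-- The successors of `p` are the points `(p.2 + 1, j + 1)` with `j < p.1`; there are none when
`p.1` is negative, in agreement with `Int.toNat`. -/
def walkStepEquiv (p : ℤ × ℤ) : Fin p.1.toNat ≃ {q // WalkStep p q} where
  toFun j := ⟨(p.2 + 1, j + 1), rfl, by dsimp only; omega, by dsimp only; omega⟩
  invFun q := ⟨(q.1.2 - 1).toNat, by have := q.2.2; omega⟩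
  left_inv j := by ext; simp
  right_inv := by
    rintro ⟨⟨a, b⟩, ha, hb, -⟩
    ext
    · exact ha.symm
    · dsimp only at hb ⊢; omega

instance finite_walkStep (p : ℤ × ℤ) : Finite {q // WalkStep p q} :=
  Finite.of_equiv _ (walkStepEquiv p)

theorem card_isChainFrom_walkStep (n : ℕ) (p : ℤ × ℤ) :
    Nat.card {l // IsChainFrom WalkStep n p l} =
      coeff (n / 2) (catalanSeries ^ (p.2 + 1).toNat) *
        coeff ((n + 1) / 2) (catalanSeries ^ p.1.toNat) := by
  induction n generalizing p with
  | zero => simp [card_isChainFrom_zero]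
  | succ n ih =>
    have toNat_succ (j : ℕ) : ((j : ℤ) + 1 + 1).toNat = j + 2 := by omega
    calc Nat.card {l // IsChainFrom WalkStep (n + 1) p l}
        = ∑ j : Fin p.1.toNat, Nat.card {l // IsChainFrom WalkStep n (p.2 + 1, (j : ℤ) + 1) l} :=
          card_isChainFrom_succ (walkStepEquiv p) n
      _ = ∑ j : Fin p.1.toNat, coeff (n / 2) (catalanSeries ^ (j + 2 : ℕ)) *
            coeff ((n + 1) / 2) (catalanSeries ^ (p.2 + 1).toNat) := by
          simp only [ih, toNat_succ]
      _ = coeff ((n + 1) / 2) (catalanSeries ^ (p.2 + 1).toNat) *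
            coeff (n / 2 + 1) (catalanSeries ^ p.1.toNat) := by
          rw [← Finset.sum_mul, mul_comm, coeff_succ_catalanSeries_pow, Finset.sum_range]
      _ = coeff ((n + 1) / 2) (catalanSeries ^ (p.2 + 1).toNat) *
            coeff ((n + 1 + 1) / 2) (catalanSeries ^ p.1.toNat) := by
          rw [show (n + 1 + 1) / 2 = n / 2 + 1 by omega]

/-- Theorem: the number of walks of length `m` equals `C_{⌊m/2⌋+1} · C_{⌈m/2⌉+1}`. -/
theorem stmt11 (m : ℕ) (hm : 1 ≤ m) :
    walkCount m = catalan (m / 2 + 1) * catalan ((m + 1) / 2 + 1) := by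
  calc walkCount m
      = coeff (m / 2) (catalanSeries ^ 2) * coeff ((m + 1) / 2) (catalanSeries ^ 2) :=
        card_isChainFrom_walkStep m (2, 1)
    _ = catalan (m / 2 + 1) * catalan ((m + 1) / 2 + 1) := by
        simp only [coeff_catalanSeries_sq]
end

section
/- Let (a,b) ∈ ℤ² be the position reached after m steps of a walk of length at least m (walks start at (2,1) and step from (a,b) to (b+1,i) for some 1 ≤ i ≤ a). Then 2 ≤ a ≤ ⌊(m+4)/2⌋ and 1 ≤ b ≤ ⌈(m+2)/2⌉. -/
/-!
A step from `(a, b)` lands between `(b + 1, 1)` and `(b + 1, a)` in the product order, and both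
extreme choices are monotone in `(a, b)`. Hence any walk stays between the walk that always takes
`i = 1`, which never leaves `(2, 1)`, and the walk that always takes `i = a`, which runs through
`(2, 1), (2, 2), (3, 2), (3, 3), …`.
-/

theorem getElem_mem_Icc_iterate_of_isChain {α : Type*} [Preorder α] {R : α → α → Prop}
    {f g : α → α} (hf : Monotone f) (hg : Monotone g)
    (hR : ∀ p q, R p q → q ∈ Set.Icc (f p) (g p)) {l : List α} (hl : l.IsChain R)
    {m : ℕ} (hm : m < l.length) :
    l[m] ∈ Set.Icc (f^[m] l[0]) (g^[m] l[0]) := by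
  induction m with
  | zero => exact ⟨le_rfl, le_rfl⟩
  | succ m ih =>
    obtain ⟨hlower, hupper⟩ := ih (Nat.lt_of_succ_lt hm)
    obtain ⟨hstep_lower, hstep_upper⟩ := hR _ _ (hl.getElem m hm)
    rw [Function.iterate_succ_apply', Function.iterate_succ_apply']
    exact ⟨(hf hlower).trans hstep_lower, hstep_upper.trans (hg hupper)⟩

/-- The lowest step of the walk from `(a, b)`, with `i = 1`. It is defined at every point of `ℤ²`,
although it is an allowed step only when `1 ≤ a`. -/
def lowestStep (p : ℤ × ℤ) : ℤ × ℤ := (p.2 + 1, 1)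

/-- The highest step of the walk from `(a, b)`, with `i = a`. It is defined at every point of `ℤ²`,
although it is an allowed step only when `1 ≤ a`. -/
def highestStep (p : ℤ × ℤ) : ℤ × ℤ := (p.2 + 1, p.1)

theorem monotone_lowestStep : Monotone lowestStep :=
  fun _ _ h => ⟨add_le_add_left h.2 1, le_rfl⟩

theorem monotone_highestStep : Monotone highestStep :=
  fun _ _ h => ⟨add_le_add_left h.2 1, h.1⟩

theorem WalkStep.mem_Icc {p q : ℤ × ℤ} (h : WalkStep p q) :
    q ∈ Set.Icc (lowestStep p) (highestStep p) :=
  ⟨⟨h.1.ge, h.2.1⟩, ⟨h.1.le, h.2.2⟩⟩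

theorem lowestStep_iterate_two_one (m : ℕ) : lowestStep^[m] (2, 1) = (2, 1) :=
  Function.iterate_fixed rfl m

theorem highestStep_iterate_two_one (m : ℕ) :
    highestStep^[m] (2, 1) = ((((m + 4) / 2 : ℕ) : ℤ), (((m + 3) / 2 : ℕ) : ℤ)) := by
  induction m with
  | zero => rfl
  | succ m ih =>
    rw [Function.iterate_succ_apply', ih, highestStep, Prod.mk.injEq]
    omega

theorem IsWalk.getElem_zero {n : ℕ} {l : List (ℤ × ℤ)} (hl : IsWalk n l) (h : 0 < l.length) :
    l[0] = (2, 1) := by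
  rw [← Option.some_inj, ← List.getElem?_eq_getElem h, ← List.head?_eq_getElem?, hl.2.1]

theorem IsWalk.getElem_mem_Icc {n m : ℕ} {l : List (ℤ × ℤ)} (hl : IsWalk n l)
    (hm : m < l.length) :
    l[m] ∈ Set.Icc (2, 1) ((((m + 4) / 2 : ℕ) : ℤ), (((m + 3) / 2 : ℕ) : ℤ)) := by
  have hbetween := getElem_mem_Icc_iterate_of_isChain monotone_lowestStep monotone_highestStep
    (fun _ _ => WalkStep.mem_Icc) hl.2.2 hm
  rwa [hl.getElem_zero, lowestStep_iterate_two_one, highestStep_iterate_two_one] at hbetween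

/-- Lemma: if `(a,b)` is the position reached after `m` steps of a walk of length
at least `m`, then `2 ≤ a ≤ ⌊(m+4)/2⌋` and `1 ≤ b ≤ ⌈(m+2)/2⌉`. -/
theorem stmt12 (m m' : ℕ) (hm : m ≤ m') (l : List (ℤ × ℤ)) (hl : IsWalk m' l)
    (a b : ℤ) (hab : l[m]? = some (a, b)) :
    2 ≤ a ∧ a ≤ (((m + 4) / 2 : ℕ) : ℤ) ∧ 1 ≤ b ∧ b ≤ (((m + 3) / 2 : ℕ) : ℤ) := by
  obtain ⟨hlt, hpos⟩ := List.getElem?_eq_some_iff.mp hab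
  obtain ⟨hlower, hupper⟩ : (a, b) ∈ Set.Icc _ _ := hpos ▸ hl.getElem_mem_Icc hlt
  exact ⟨hlower.1, hupper.1, hlower.2, hupper.2⟩
end

section
/- Let W_m(a,b) denote the number of walks of length m ending at the point (a,b), and let T(n,k) denote the entries of Catalan's triangle. Then for every m ≥ 2: (i) for all integers i with 2 ≤ i ≤ ⌊(m+4)/2⌋, W_m(i, ⌈(m+2)/2⌉) = T(⌊m/2⌋, ⌊(m+4)/2⌋ − i); and (ii) for all integers j with 1 ≤ j ≤ ⌈(m+2)/2⌉, W_m(⌊(m+4)/2⌋, j) = T(⌈m/2⌉, ⌈(m+2)/2⌉ − j). That is, the last column of the walk-count matrix equals the ⌊m/2⌋-th row of Catalan's triangle (reversed) and the last row equals the ⌈m/2⌉-th row of Catalan's triangle (reversed). -/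
/-- Catalan's triangle: `T(0,0) = 1` and `T(n,k) = Σ_{ℓ=0}^{k} T(n−1,ℓ)` for
`0 ≤ k ≤ n` (entries outside the triangle are `0`). -/
def catalanTriangle : ℕ → ℕ → ℕ
  | 0, 0 => 1
  | 0, _ + 1 => 0
  | n + 1, k =>
      if k ≤ n + 1 then ∑ l ∈ Finset.range (k + 1), catalanTriangle n l else 0

/-!
After `m` steps the first coordinate is at most `⌊(m+4)/2⌋` and the second at most `⌊(m+3)/2⌋`,
since a step turns the bound on the second coordinate, plus one, into the bound on the first, and
the bound on the first into the bound on the second. Removing the last step of a walk gives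
`W_{m+1}(a,b) = ∑_{a' ≥ b} W_m(a', a-1)`. For maximal `b` only one term survives, so the last column
at time `m + 1` is the last row at time `m`; for maximal `a` the sum runs over the last column at
time `m`, so the last row at time `m + 1` consists of its partial sums taken from the maximal `a'`
downwards, which is the recurrence defining the rows of Catalan's triangle.
-/

theorem isWalk_iff {m : ℕ} {l : List (ℤ × ℤ)} :
    IsWalk m l ↔ l.length = m + 1 ∧ l.head? = some (2, 1) ∧ l.IsChain WalkStep := Iff.rfl

theorem isWalk_zero_iff {l : List (ℤ × ℤ)} : IsWalk 0 l ↔ l = [(2, 1)] := by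
  constructor
  · rintro ⟨hlength, hhead, -⟩
    obtain ⟨p, rfl⟩ := List.length_eq_one_iff.1 hlength
    simpa using hhead
  · rintro rfl
    exact ⟨rfl, rfl, List.isChain_singleton _⟩

theorem IsWalk.ne_nil {m : ℕ} {l : List (ℤ × ℤ)} (hl : IsWalk m l) : l ≠ [] :=
  List.ne_nil_of_length_eq_add_one hl.1

theorem isWalk_append_singleton_iff {m : ℕ} {l : List (ℤ × ℤ)} {p q : ℤ × ℤ}
    (hp : l.getLast? = some p) : IsWalk (m + 1) (l ++ [q]) ↔ IsWalk m l ∧ WalkStep p q := by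
  have hl : l ≠ [] := by
    rintro rfl
    simp at hp
  simp [isWalk_iff, List.isChain_append, List.head?_append_of_ne_nil l hl, hp, and_assoc]

theorem isWalk_succ_iff {m : ℕ} {l : List (ℤ × ℤ)} :
    IsWalk (m + 1) l ↔
      ∃ l' p q, l = l' ++ [q] ∧ l'.getLast? = some p ∧ IsWalk m l' ∧ WalkStep p q := by
  constructor
  · intro hl
    obtain ⟨l', q, rfl⟩ := List.eq_nil_or_concat' l |>.resolve_left hl.ne_nil
    have hlength : l'.length = m + 1 := by simpa using hl.1
    have hlast := List.getLast?_eq_some_getLast (List.ne_nil_of_length_eq_add_one hlength)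
    exact ⟨l', _, q, rfl, hlast, (isWalk_append_singleton_iff hlast).1 hl⟩
  · rintro ⟨l', p, q, rfl, hlast, hl'⟩
    exact (isWalk_append_singleton_iff hlast).2 hl'

theorem IsWalk.getLast?_bounds {m : ℕ} {l : List (ℤ × ℤ)} {a b : ℤ} (hl : IsWalk m l)
    (hlast : l.getLast? = some (a, b)) :
    (2 ≤ a ∧ a ≤ (m + 4) / 2) ∧ 1 ≤ b ∧ b ≤ (m + 3) / 2 := by
  induction m generalizing l a b with
  | zero =>
    obtain rfl := isWalk_zero_iff.1 hl
    obtain ⟨rfl, rfl⟩ : 2 = a ∧ 1 = b := by simpa using hlast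
    norm_num
  | succ m ih =>
    obtain ⟨l', ⟨a', b'⟩, q, rfl, hlast', hl', hstep⟩ := isWalk_succ_iff.1 hl
    obtain rfl : q = (a, b) := by simpa using hlast
    obtain ⟨ha : a = b' + 1, hb : 1 ≤ b, hba : b ≤ a'⟩ := hstep
    have := ih hl' hlast'
    omega

/-- The type of walks of length `m` ending at `(a, b)`, whose cardinality is `W_m(a,b)`. -/
abbrev WalkTo (m : ℕ) (a b : ℤ) : Type :=
  {l : List (ℤ × ℤ) // IsWalk m l ∧ l.getLast? = some (a, b)}

/-- The extension of a walk ending at `(a', a - 1)`, for some `a' ≥ b`, by a last step to `(a, b)`.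
The bound `(m + 4) / 2` on `a'` excludes no walk; it keeps the index set finite. -/
def WalkTo.extend {m : ℕ} {a b : ℤ} (hb : 1 ≤ b)
    (w : Σ a' : Finset.Icc b ((m + 4) / 2 : ℤ), WalkTo m a' (a - 1)) : WalkTo (m + 1) a b :=
  ⟨w.2.1 ++ [(a, b)],
    (isWalk_append_singleton_iff w.2.2.2).2
      ⟨w.2.2.1, (sub_add_cancel a 1).symm, hb, (Finset.mem_Icc.1 w.1.2).1⟩,
    List.getLast?_concat⟩

theorem WalkTo.extend_bijective {m : ℕ} {a b : ℤ} (hb : 1 ≤ b) :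
    Function.Bijective (WalkTo.extend (m := m) (a := a) hb) := by
  constructor
  · rintro ⟨⟨x, hx⟩, ⟨l, hl, hlast⟩⟩ ⟨⟨y, hy⟩, ⟨l', hl', hlast'⟩⟩ h
    obtain rfl : l = l' := List.append_cancel_right (congrArg Subtype.val h)
    obtain rfl : x = y := by simpa [hlast] using hlast'
    rfl
  · rintro ⟨l, hl, hlast⟩
    obtain ⟨l', ⟨a', b'⟩, q, rfl, hlast', hl', hstep⟩ := isWalk_succ_iff.1 hl
    obtain rfl : q = (a, b) := by simpa using hlast
    obtain ⟨ha : a = b' + 1, -, hba : b ≤ a'⟩ := hstep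
    obtain rfl : b' = a - 1 := by omega
    have ha' := (hl'.getLast?_bounds hlast').1.2
    exact ⟨⟨⟨a', Finset.mem_Icc.2 ⟨hba, ha'⟩⟩, ⟨l', hl', hlast'⟩⟩, rfl⟩

instance WalkTo.instFinite (m : ℕ) (a b : ℤ) : Finite (WalkTo m a b) := by
  induction m generalizing a b with
  | zero =>
    have : Subsingleton (WalkTo 0 a b) :=
      ⟨fun w w' => Subtype.ext <|
        (isWalk_zero_iff.1 w.2.1).trans (isWalk_zero_iff.1 w'.2.1).symm⟩
    infer_instance
  | succ m ih =>
    by_cases hb : 1 ≤ b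
    · exact Finite.of_surjective _ (WalkTo.extend_bijective hb).surjective
    · have : IsEmpty (WalkTo (m + 1) a b) := ⟨fun w => hb (w.2.1.getLast?_bounds w.2.2).2.1⟩
      infer_instance

theorem walkCountEnd_zero_two_one : walkCountEnd 0 2 1 = 1 := by
  refine Nat.card_eq_one_iff_exists.2 ⟨⟨[(2, 1)], isWalk_zero_iff.2 rfl, rfl⟩, fun w => ?_⟩
  exact Subtype.ext (isWalk_zero_iff.1 w.2.1)

theorem walkCountEnd_succ (m : ℕ) (a : ℤ) {b : ℤ} (hb : 1 ≤ b) :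
    walkCountEnd (m + 1) a b =
      ∑ a' ∈ Finset.Icc b ((m + 4) / 2 : ℤ), walkCountEnd m a' (a - 1) := by
  calc walkCountEnd (m + 1) a b
      = Nat.card (Σ a' : Finset.Icc b ((m + 4) / 2 : ℤ), WalkTo m a' (a - 1)) :=
        (Nat.card_eq_of_bijective _ (WalkTo.extend_bijective hb)).symm
    _ = ∑ a' : Finset.Icc b ((m + 4) / 2 : ℤ), walkCountEnd m a' (a - 1) := Nat.card_sigma
    _ = ∑ a' ∈ Finset.Icc b ((m + 4) / 2 : ℤ), walkCountEnd m a' (a - 1) :=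
        Finset.sum_coe_sort _ fun a' => walkCountEnd m a' (a - 1)

theorem walkCountEnd_eq_zero {m : ℕ} {a b : ℤ} (h : a < 2 ∨ b < 1) : walkCountEnd m a b = 0 := by
  have : IsEmpty (WalkTo m a b) := ⟨fun w => by
    have := w.2.1.getLast?_bounds w.2.2
    omega⟩
  exact Nat.card_of_isEmpty

theorem catalanTriangle_eq_zero_of_lt {n k : ℕ} (h : n < k) : catalanTriangle n k = 0 := by
  obtain ⟨k, rfl⟩ := Nat.exists_eq_succ_of_ne_zero h.ne_bot
  cases n with
  | zero => rfl
  | succ n => rw [catalanTriangle, if_neg h.not_ge]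

theorem catalanTriangle_succ {n k : ℕ} (h : k ≤ n + 1) :
    catalanTriangle (n + 1) k = ∑ l ∈ Finset.range (k + 1), catalanTriangle n l := by
  rw [catalanTriangle, if_pos h]

theorem sum_Icc_sub_natCast {M : Type*} [AddCommMonoid M] (f : ℤ → M) (n : ℤ) (k : ℕ) :
    ∑ x ∈ Finset.Icc (n - k) n, f x = ∑ l ∈ Finset.range (k + 1), f (n - l) := by
  refine Finset.sum_nbij' (fun x => (n - x).toNat) (fun l => n - l) ?_ ?_ ?_ ?_ ?_
  all_goals intro x hx; simp only [Finset.mem_Icc, Finset.mem_range] at hx ⊢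
  · omega
  · omega
  · omega
  · omega
  · congr 1
    omega

theorem walkCountEnd_succ_lastCol (m : ℕ) (a : ℤ) :
    walkCountEnd (m + 1) a ((m + 4) / 2) = walkCountEnd m ((m + 4) / 2) (a - 1) := by
  rw [walkCountEnd_succ m a (by omega), Finset.Icc_self, Finset.sum_singleton]

theorem walkCountEnd_succ_lastRow {m k : ℕ} (hk : k ≤ m / 2 + 1) :
    walkCountEnd (m + 1) ((m + 5) / 2) ((m + 4) / 2 - k) =
      ∑ l ∈ Finset.range (k + 1), walkCountEnd m ((m + 4) / 2 - l) ((m + 3) / 2) := by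
  rw [walkCountEnd_succ m _ (by omega), sum_Icc_sub_natCast,
    show ((m + 5) / 2 - 1 : ℤ) = (m + 3) / 2 by omega]

theorem walkCountEnd_lastCol_and_lastRow (m : ℕ) :
    (∀ k : ℕ, walkCountEnd m ((m + 4) / 2 - k) ((m + 3) / 2) = catalanTriangle (m / 2) k) ∧
    (∀ k : ℕ, walkCountEnd m ((m + 4) / 2) ((m + 3) / 2 - k) =
      catalanTriangle ((m + 1) / 2) k) := by
  induction m with
  | zero =>
    refine ⟨fun k => ?_, fun k => ?_⟩ <;> cases k with
    | zero => simpa [catalanTriangle] using walkCountEnd_zero_two_one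
    | succ k => simpa [catalanTriangle] using walkCountEnd_eq_zero (by omega)
  | succ m ih =>
    obtain ⟨lastCol, lastRow⟩ := ih
    have hrow : ((↑(m + 1) + 4) / 2 : ℤ) = (m + 5) / 2 := by omega
    have hcol : ((↑(m + 1) + 3) / 2 : ℤ) = (m + 4) / 2 := by omega
    rw [hrow, hcol]
    refine ⟨fun k => ?_, fun k => ?_⟩
    · rw [walkCountEnd_succ_lastCol, ← lastRow k,
        show ((m + 5) / 2 - k - 1 : ℤ) = (m + 3) / 2 - k by omega]
    · rw [show (m + 1 + 1) / 2 = m / 2 + 1 by omega]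
      obtain hk | hk := le_or_gt k (m / 2 + 1)
      · rw [walkCountEnd_succ_lastRow hk, catalanTriangle_succ hk]
        exact Finset.sum_congr rfl fun l _ => lastCol l
      · rw [catalanTriangle_eq_zero_of_lt hk, walkCountEnd_eq_zero (by omega)]

/-- Lemma: for `m ≥ 2`, the last column of the walk-count matrix is the
`⌊m/2⌋`-th row of Catalan's triangle (reversed), and the last row is the
`⌈m/2⌉`-th row of Catalan's triangle (reversed). -/
theorem stmt14 (m : ℕ) (hm : 2 ≤ m) :
    (∀ i : ℕ, 2 ≤ i → i ≤ (m + 4) / 2 →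
      walkCountEnd m (i : ℤ) (((m + 3) / 2 : ℕ) : ℤ) =
        catalanTriangle (m / 2) ((m + 4) / 2 - i)) ∧
    (∀ j : ℕ, 1 ≤ j → j ≤ (m + 3) / 2 →
      walkCountEnd m (((m + 4) / 2 : ℕ) : ℤ) (j : ℤ) =
        catalanTriangle ((m + 1) / 2) ((m + 3) / 2 - j)) := by
  obtain ⟨lastCol, lastRow⟩ := walkCountEnd_lastCol_and_lastRow m
  constructor
  · intro i _ hi
    rw [← lastCol]
    congr 1
    omega
  · intro j _ hj
    rw [← lastRow]
    congr 1
    omega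
end

section
/- Let W_m(a,b) denote the number of walks of length m ending at the point (a,b). Then for every m ≥ 2 and all integers i, j with 1 ≤ i ≤ ⌊m/2⌋ and 1 ≤ j ≤ ⌈m/2⌉, W_m(i+1, j) = W_m(i+1, ⌈(m+2)/2⌉) · W_m(⌊(m+4)/2⌋, j); that is, each entry of the walk-count matrix equals the product of the entry in its row and the last column with the entry in its column and the last row. -/
/-- The `R`-chains with `n` steps from `x` to `y`, each encoded as the list of its `n + 1`
points. -/
def chainsBetween {α : Type*} (R : α → α → Prop) (n : ℕ) (x y : α) : Set (List α) :=
  {l | l.length = n + 1 ∧ l.head? = some x ∧ l.IsChain R ∧ l.getLast? = some y}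

/-- The relation between consecutive windows `(u, v)`, `(v, w)` of a sequence in which terms two
places apart are related by `R`. -/
def Interleave {α : Type*} (R : α → α → Prop) (p q : α × α) : Prop :=
  q.1 = p.2 ∧ R p.1 q.2

/-- The relation between consecutive terms of a Catalan sequence: a positive sequence that increases
by at most one at each step. -/
def CatalanStep (x y : ℤ) : Prop := 1 ≤ y ∧ y ≤ x + 1

section Chains

variable {α β : Type*} {R : α → α → Prop} {n : ℕ} {x y : α} {l : List α}

theorem mem_chainsBetween_zero : l ∈ chainsBetween R 0 x y ↔ l = [x] ∧ x = y := by
  constructor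
  · rintro ⟨hlen, hhead, -, hlast⟩
    obtain ⟨a, rfl⟩ := List.length_eq_one_iff.1 hlen
    simp_all
  · rintro ⟨rfl, rfl⟩
    simp [chainsBetween]

instance : Subsingleton (chainsBetween R 0 x y) :=
  ⟨fun l l' ↦ Subtype.ext <|
    (mem_chainsBetween_zero.1 l.2).1.trans (mem_chainsBetween_zero.1 l'.2).1.symm⟩

theorem append_singleton_mem_chainsBetween {z : α} (hl : l ∈ chainsBetween R n x z) (hzy : R z y) :
    l ++ [y] ∈ chainsBetween R (n + 1) x y := by
  obtain ⟨hlen, hhead, hchain, hlast⟩ := hl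
  refine ⟨by simp [hlen], by simp [hhead], ?_, by simp⟩
  exact List.isChain_append.2 ⟨hchain, List.isChain_singleton y, by simpa [hlast] using hzy⟩

theorem exists_eq_append_singleton_of_mem_chainsBetween (hl : l ∈ chainsBetween R (n + 1) x y) :
    ∃ z, R z y ∧ ∃ l' ∈ chainsBetween R n x z, l' ++ [y] = l := by
  obtain ⟨hlen, hhead, hchain, hlast⟩ := hl
  obtain ⟨l', rfl⟩ := List.getLast?_eq_some_iff.1 hlast
  have hlen' : l'.length = n + 1 := by simpa using hlen
  have hne : l' ≠ [] := List.ne_nil_of_length_eq_add_one hlen'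
  obtain ⟨z, hz⟩ := Option.isSome_iff_exists.1 (List.getLast?_isSome.2 hne)
  obtain ⟨hchain', -, hstep⟩ := List.isChain_append.1 hchain
  rw [List.head?_append_of_ne_nil _ hne] at hhead
  exact ⟨z, hstep z hz y rfl, l', ⟨hlen', hhead, hchain', hz⟩, rfl⟩

/-- Removing the last point of a chain with `n + 1` steps. -/
noncomputable def chainsBetweenSuccEquiv (R : α → α → Prop) (n : ℕ) (x y : α) :
    chainsBetween R (n + 1) x y ≃ Σ z : {z // R z y}, chainsBetween R n x z :=
  .symm <| .ofBijective
    (fun c ↦ ⟨c.2 ++ [y], append_singleton_mem_chainsBetween c.2.2 c.1.2⟩) <| by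
      constructor
      · rintro ⟨⟨z, hz⟩, l, hl⟩ ⟨⟨z', hz'⟩, l', hl'⟩ h
        obtain rfl : l = l' := List.append_left_injective _ (congrArg Subtype.val h)
        obtain rfl : z = z' := Option.some.inj (hl.2.2.2.symm.trans hl'.2.2.2)
        rfl
      · rintro ⟨l, hl⟩
        obtain ⟨z, hz, l', hl', rfl⟩ := exists_eq_append_singleton_of_mem_chainsBetween hl
        exact ⟨⟨⟨z, hz⟩, l', hl'⟩, rfl⟩

/-- Chains are carried to chains by an isomorphism of relations. -/
def chainsBetweenCongr {S : β → β → Prop} (e : R ≃r S) (n : ℕ) (x y : α) :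
    chainsBetween R n x y ≃ chainsBetween S n (e x) (e y) :=
  (Equiv.listEquivOfEquiv e.toEquiv).subtypeEquiv fun l ↦ by
    change _ ↔ l.map e ∈ chainsBetween S n (e x) (e y)
    simp [chainsBetween, List.isChain_map, e.map_rel_iff, Option.map_eq_some_iff]

end Chains

section Interleave

variable {α : Type*}

/-- The windows from which `Interleave R` leads to `(x, y)`. -/
def interleavePredEquiv (R : α → α → Prop) (x y : α) :
    {p // Interleave R p (x, y)} ≃ {z // R z y} where
  toFun p := ⟨p.1.1, p.2.2⟩
  invFun z := ⟨(z, x), rfl, z.2⟩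
  left_inv := by
    rintro ⟨⟨u, v⟩, huv, -⟩
    obtain rfl : x = v := huv
    rfl
  right_inv _ := rfl

/-- The one-window case of the splitting into alternate terms, for arbitrary first terms `a, b`. -/
def chainsBetweenInterleaveZeroEquiv (R : α → α → Prop) (a b x y : α) :
    chainsBetween (Interleave R) 0 (a, b) (x, y) ≃ chainsBetween R 0 a x × chainsBetween R 0 b y :=
  equivOfSubsingletonOfSubsingleton
    (fun l ↦
      have h := Prod.ext_iff.1 (mem_chainsBetween_zero.1 l.2).2
      (⟨[a], mem_chainsBetween_zero.2 ⟨rfl, h.1⟩⟩, ⟨[b], mem_chainsBetween_zero.2 ⟨rfl, h.2⟩⟩))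
    (fun l ↦
      have h := Prod.ext (mem_chainsBetween_zero.1 l.1.2).2 (mem_chainsBetween_zero.1 l.2.2).2
      ⟨[(a, b)], mem_chainsBetween_zero.2 ⟨rfl, h⟩⟩)

/-- Splits a sequence starting with `a, a` into its subsequences of alternate terms. -/
noncomputable def chainsBetweenInterleaveEquiv (R : α → α → Prop) (a : α) :
    ∀ (m : ℕ) (x y : α), chainsBetween (Interleave R) m (a, a) (x, y) ≃
      chainsBetween R (m / 2) a x × chainsBetween R ((m + 1) / 2) a y
  | 0, x, y => chainsBetweenInterleaveZeroEquiv R a a x y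
  | m + 1, x, y =>
    calc ↥(chainsBetween (Interleave R) (m + 1) (a, a) (x, y))
      _ ≃ Σ p : {p // Interleave R p (x, y)}, chainsBetween (Interleave R) m (a, a) p :=
        chainsBetweenSuccEquiv ..
      _ ≃ Σ z : {z // R z y}, chainsBetween (Interleave R) m (a, a) (z, x) :=
        ((interleavePredEquiv R x y).symm.sigmaCongrLeft).symm
      _ ≃ Σ z : {z // R z y}, chainsBetween R (m / 2) a z × chainsBetween R ((m + 1) / 2) a x :=
        .sigmaCongrRight fun z ↦ chainsBetweenInterleaveEquiv R a m z x
      _ ≃ (Σ z : {z // R z y}, chainsBetween R (m / 2) a z) × chainsBetween R ((m + 1) / 2) a x :=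
        (Equiv.sigmaProdDistrib ..).symm
      _ ≃ chainsBetween R (m / 2 + 1) a y × chainsBetween R ((m + 1) / 2) a x :=
        (chainsBetweenSuccEquiv ..).symm.prodCongr (.refl _)
      _ ≃ chainsBetween R ((m + 1) / 2) a x × chainsBetween R (m / 2 + 1) a y :=
        .prodComm ..
      _ ≃ chainsBetween R ((m + 1) / 2) a x × chainsBetween R ((m + 1 + 1) / 2) a y :=
        .prodCongr (.refl _) (.setCongr <|
          congrArg (chainsBetween R · a y) (Nat.add_div_right m two_pos).symm)

end Interleave

section Catalan

variable {n : ℕ} {x y : ℤ} {l : List ℤ}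

theorem le_add_of_mem_chainsBetween_catalanStep (hl : l ∈ chainsBetween CatalanStep n x y) :
    y ≤ x + n := by
  induction n generalizing y l with
  | zero => simp [(mem_chainsBetween_zero.1 hl).2]
  | succ n ih =>
    obtain ⟨z, hzy, l', hl', -⟩ := exists_eq_append_singleton_of_mem_chainsBetween hl
    have hzx : z ≤ x + n := ih hl'
    have hyz : y ≤ z + 1 := hzy.2
    push_cast
    omega

theorem chainsBetween_catalanStep_add (hx : 0 ≤ x) (n : ℕ) :
    chainsBetween CatalanStep n x (x + n) = {(List.range (n + 1)).map fun k : ℕ ↦ x + k} := by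
  induction n with
  | zero => ext; simp [mem_chainsBetween_zero]
  | succ n ih =>
    have hrange : (List.range (n + 1 + 1)).map (fun k : ℕ ↦ x + k) =
        (List.range (n + 1)).map (fun k : ℕ ↦ x + k) ++ [x + (n + 1 : ℕ)] := by
      rw [List.range_succ, List.map_append, List.map_singleton]
    rw [hrange]
    refine Set.eq_singleton_iff_unique_mem.2 ⟨?_, fun l hl ↦ ?_⟩
    · refine append_singleton_mem_chainsBetween (z := x + n) (by simp [ih]) ⟨?_, ?_⟩ <;>
        push_cast <;> omega
    · obtain ⟨z, hz, l', hl', rfl⟩ := exists_eq_append_singleton_of_mem_chainsBetween hl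
      obtain rfl : z = x + n := by
        have hzx : z ≤ x + n := le_add_of_mem_chainsBetween_catalanStep hl'
        have hxz : x + (n + 1 : ℕ) ≤ z + 1 := hz.2
        omega
      rw [ih] at hl'
      rw [hl']

theorem card_chainsBetween_catalanStep_add (hx : 0 ≤ x) (n : ℕ) :
    Nat.card (chainsBetween CatalanStep n x (x + n)) = 1 := by
  rw [chainsBetween_catalanStep_add hx]
  simp

end Catalan

/-- The change of variables `(a, b) ↦ (a - 1, b)`, which turns walks into sequences of windows. -/
def walkStepRelIso : WalkStep ≃r Interleave CatalanStep where
  toEquiv := (Equiv.subRight 1).prodCongr (.refl ℤ)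
  map_rel_iff' {p q} := by
    simp [Interleave, CatalanStep, WalkStep, sub_eq_iff_eq_add]

theorem walkCountEnd_eq_card_mul_card (m : ℕ) (a b : ℤ) :
    walkCountEnd m a b = Nat.card (chainsBetween CatalanStep (m / 2) 1 (a - 1)) *
      Nat.card (chainsBetween CatalanStep ((m + 1) / 2) 1 b) :=
  calc walkCountEnd m a b
    _ = Nat.card (chainsBetween WalkStep m (2, 1) (a, b)) :=
      Nat.card_congr <| .subtypeEquivRight fun _ ↦ by
        simp only [IsWalk, and_assoc]
        rfl
    _ = Nat.card (chainsBetween (Interleave CatalanStep) m (1, 1) (a - 1, b)) :=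
      Nat.card_congr (chainsBetweenCongr walkStepRelIso m (2, 1) (a, b))
    _ = _ := by
      rw [Nat.card_congr (chainsBetweenInterleaveEquiv CatalanStep 1 m (a - 1) b), Nat.card_prod]

theorem stmt15_general (m : ℕ) (a b : ℤ) :
    walkCountEnd m a b =
      walkCountEnd m a ((m + 3) / 2 : ℕ) * walkCountEnd m ((m + 4) / 2 : ℕ) b := by
  have hcol : (((m + 3) / 2 : ℕ) : ℤ) = 1 + ((m + 1) / 2 : ℕ) := by omega
  have hrow : (((m + 4) / 2 : ℕ) : ℤ) - 1 = 1 + (m / 2 : ℕ) := by omega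
  simp only [walkCountEnd_eq_card_mul_card, hcol, hrow,
    card_chainsBetween_catalanStep_add zero_le_one, mul_one, one_mul]

/-- Lemma: for `m ≥ 2`, each entry of the walk-count matrix is the product of the
entry in its row and the last column with the entry in its column and the last row:
`W_m(i+1, j) = W_m(i+1, ⌈(m+2)/2⌉) · W_m(⌊(m+4)/2⌋, j)` for `1 ≤ i ≤ ⌊m/2⌋` and
`1 ≤ j ≤ ⌈m/2⌉`. -/
theorem stmt15 (m : ℕ) (hm : 2 ≤ m) (i j : ℕ)
    (hi1 : 1 ≤ i) (hi2 : i ≤ m / 2) (hj1 : 1 ≤ j) (hj2 : j ≤ (m + 1) / 2) :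
    walkCountEnd m ((i : ℤ) + 1) (j : ℤ) =
      walkCountEnd m ((i : ℤ) + 1) (((m + 3) / 2 : ℕ) : ℤ) *
      walkCountEnd m (((m + 4) / 2 : ℕ) : ℤ) (j : ℤ) :=
  stmt15_general m _ _
end
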